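/- arXiv:2601.08421 — 2 statements merged into one kernel-verified Lean document; each statement's English description precedes it below -/
import Mathlib

section
/- Let X, A be finite sets, D a distribution on X, φ: X×A → ℝ^d with ‖φ(x,a)‖₂ ≤ 1, π₀ a full-support base policy, and π* = π_{θ*} a linear softmax policy whose feature covariance satisfies V(π*) ⪰ λ·I_d for some λ > 0. For θ ∈ ℝ^d define f_θ(x,a) = θᵀφ(x,a) and the mean absolute deviation MAD_π(f) = E_{x∼D, a∼π(x)}[|f(x,a) − E_{a'∼π(x)}[f(x,a')]|]. Then for every θ: (i) ‖θ − θ*‖₂ ≤ (2/λ)·MAD_{π*}(f_θ − f_{θ*}); and (ii) if MAD_{π*}(f_θ − f_{θ*}) ≤ r then sup_{x,a} π*(a|x)/π_θ(a|x) ≤ e^{4r/λ}, and hence the coverage C_{π_θ→π*} is at most e^{4r/λ}. -/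
/-!
Write `Δ = θ - θ*` and `N = ‖Δ‖₂`. By Cauchy–Schwarz `|Δᵀφ(x,a)| ≤ N`, so the deviation of `Δᵀφ`
from its conditional mean is at most `2N` in absolute value. Evaluating the Loewner bound at `Δ`
gives `λN² ≤ E[dev²] ≤ 2N · E|dev| = 2N · MAD`, which is (i). The log-density ratio of `π*` to
`π_θ` is `-Δᵀφ(x,a)` plus the log-ratio of the normalizers, each at most `N`, so the density ratio
is at most `e^{2N}`, and (i) turns this into `e^{4r/λ}`.

The coverage is bounded by the density ratio `B` with no loss for the change of centre: since
`E|g - m| = 2 E(g - m)⁺ = 2 E(m - g)⁺` when `m` is the mean of `g`, one picks the positive part if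
`m' ≥ m` and the negative part otherwise, so that moving the centre from `m'` to `m` only
increases the integrand, and only then changes measure (`mad_le_of_ratio`).
-/


open Finset Matrix

/-- Linear softmax policy: π_θ(a|x) ∝ π₀(a|x)·exp(θᵀφ(x,a)). -/
noncomputable def pol {X A : Type*} [Fintype A] {d : ℕ}
    (π₀ : X → A → ℝ) (φ : X → A → Fin d → ℝ) (θ : Fin d → ℝ) (x : X) (a : A) : ℝ :=
  π₀ x a * Real.exp (∑ i, θ i * φ x a i) /
    ∑ b, π₀ x b * Real.exp (∑ i, θ i * φ x b i)

/-- Mean feature of policy π at prompt x. -/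
noncomputable def featMean {X A : Type*} [Fintype A] {d : ℕ}
    (φ : X → A → Fin d → ℝ) (π : X → A → ℝ) (x : X) (i : Fin d) : ℝ :=
  ∑ a, π x a * φ x a i

/-- Feature covariance matrix V(π). -/
noncomputable def covMat {X A : Type*} [Fintype X] [Fintype A] {d : ℕ}
    (D : X → ℝ) (φ : X → A → Fin d → ℝ) (π : X → A → ℝ) : Matrix (Fin d) (Fin d) ℝ :=
  Matrix.of fun i j => ∑ x, D x * ∑ a, π x a *
    ((φ x a i - featMean φ π x i) * (φ x a j - featMean φ π x j))

/-- Loewner order: M ⪯ N iff N − M is positive semidefinite. -/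
def LoewnerLE {d : ℕ} (M N : Matrix (Fin d) (Fin d) ℝ) : Prop := (N - M).PosSemidef

/-- Mean absolute deviation MAD_π(f) = E_{x∼D,a∼π(x)}[|f(x,a) − E_{a'∼π(x)}[f(x,a')]|]. -/
noncomputable def madOf {X A : Type*} [Fintype X] [Fintype A]
    (D : X → ℝ) (π : X → A → ℝ) (f : X → A → ℝ) : ℝ :=
  ∑ x, D x * ∑ a, π x a * |f x a - ∑ b, π x b * f x b|

/-- Linear function f_θ(x,a) = θᵀφ(x,a). -/
noncomputable def linF {X A : Type*} {d : ℕ}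
    (φ : X → A → Fin d → ℝ) (θ : Fin d → ℝ) (x : X) (a : A) : ℝ :=
  ∑ i, θ i * φ x a i

theorem mad_eq_two_pos {A : Type*} [Fintype A] (p : A → ℝ) (hp : ∑ a, p a = 1) (g : A → ℝ) :
    ∑ a, p a * |g a - ∑ b, p b * g b| = 2 * ∑ a, p a * max (g a - ∑ b, p b * g b) 0 := by
  have h0 : ∑ a, p a * (g a - ∑ b, p b * g b) = 0 := by
    simp only [mul_sub, Finset.sum_sub_distrib, ← Finset.sum_mul, hp, one_mul, sub_self]
  have h : ∀ t : ℝ, |t| = 2 * max t 0 - t := by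
    intro t
    rcases le_total 0 t with ht | ht
    · rw [abs_of_nonneg ht, max_eq_left ht]; ring
    · rw [abs_of_nonpos ht, max_eq_right ht]; ring
  calc _ = ∑ a, (2 * (p a * max (g a - ∑ b, p b * g b) 0) - p a * (g a - ∑ b, p b * g b)) := by
        refine Finset.sum_congr rfl fun a _ => ?_
        rw [h]; ring
    _ = _ := by rw [Finset.sum_sub_distrib, h0, sub_zero, Finset.mul_sum]

/-- The case of `mad_le_of_ratio` where the mean under `q` is the larger one. -/
theorem mad_le_of_ratio_of_mean_le {A : Type*} [Fintype A] (p q : A → ℝ) (hp : ∑ a, p a = 1)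
    (hq : ∑ a, q a = 1) (hq0 : ∀ a, 0 ≤ q a) (B : ℝ) (hB : ∀ a, q a ≤ B * p a) (g : A → ℝ)
    (hm : ∑ b, p b * g b ≤ ∑ b, q b * g b) :
    ∑ a, q a * |g a - ∑ b, q b * g b| ≤ B * ∑ a, p a * |g a - ∑ b, p b * g b| := by
  rw [mad_eq_two_pos p hp, mad_eq_two_pos q hq, mul_left_comm, Finset.mul_sum _ _ B]
  refine mul_le_mul_of_nonneg_left (Finset.sum_le_sum fun a _ => ?_) zero_le_two
  calc q a * max (g a - ∑ b, q b * g b) 0 ≤ q a * max (g a - ∑ b, p b * g b) 0 :=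
        mul_le_mul_of_nonneg_left (max_le_max (by linarith) le_rfl) (hq0 a)
    _ ≤ B * p a * max (g a - ∑ b, p b * g b) 0 :=
        mul_le_mul_of_nonneg_right (hB a) (le_max_right _ _)
    _ = _ := by ring

/-- A density ratio bound `q ≤ B p` transfers mean absolute deviations with the same constant,
although each deviation is taken around its own mean. -/
theorem mad_le_of_ratio {A : Type*} [Fintype A] (p q : A → ℝ) (hp : ∑ a, p a = 1)
    (hq : ∑ a, q a = 1) (hq0 : ∀ a, 0 ≤ q a) (B : ℝ) (hB : ∀ a, q a ≤ B * p a) (g : A → ℝ) :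
    ∑ a, q a * |g a - ∑ b, q b * g b| ≤ B * ∑ a, p a * |g a - ∑ b, p b * g b| := by
  rcases le_total (∑ b, p b * g b) (∑ b, q b * g b) with hm | hm
  · exact mad_le_of_ratio_of_mean_le p q hp hq hq0 B hB g hm
  · -- Negating `g` exchanges positive and negative parts and reverses the order of the means.
    have h := mad_le_of_ratio_of_mean_le p q hp hq hq0 B hB (fun a => -g a)
      (by simpa [Finset.sum_neg_distrib] using hm)
    have e : ∀ s t : ℝ, |-s - -t| = |s - t| := fun s t => by
      rw [← abs_neg]; congr 1; ring
    simpa only [mul_neg, Finset.sum_neg_distrib, e] using h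

section Softmax

variable {X A : Type*} [Fintype A] [Nonempty A] {d : ℕ} {π₀ : X → A → ℝ} {φ : X → A → Fin d → ℝ}

theorem norm_pos (hπ₀ : ∀ x a, 0 < π₀ x a) (θ : Fin d → ℝ) (x : X) :
    0 < ∑ b, π₀ x b * Real.exp (∑ i, θ i * φ x b i) :=
  Finset.sum_pos (fun b _ => mul_pos (hπ₀ x b) (Real.exp_pos _)) Finset.univ_nonempty

theorem pol_pos (hπ₀ : ∀ x a, 0 < π₀ x a) (θ : Fin d → ℝ) (x : X) (a : A) :
    0 < pol π₀ φ θ x a :=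
  div_pos (mul_pos (hπ₀ x a) (Real.exp_pos _)) (norm_pos hπ₀ θ x)

theorem pol_sum (hπ₀ : ∀ x a, 0 < π₀ x a) (θ : Fin d → ℝ) (x : X) :
    ∑ a, pol π₀ φ θ x a = 1 := by
  unfold pol
  rw [← Finset.sum_div, div_self (norm_pos hπ₀ θ x).ne']

/-- If the exponents of two softmax policies differ by at most `N`, the density ratio is at most
`e^{2N}`: one factor `e^N` from the weight, one from the normalizer. -/
theorem pol_le (hπ₀ : ∀ x a, 0 < π₀ x a) (θ η : Fin d → ℝ) (N : ℝ) (x : X)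
    (h : ∀ a, |∑ i, θ i * φ x a i - ∑ i, η i * φ x a i| ≤ N) (a : A) :
    pol π₀ φ η x a ≤ Real.exp (2 * N) * pol π₀ φ θ x a := by
  have hZ : ∑ b, π₀ x b * Real.exp (∑ i, θ i * φ x b i)
      ≤ Real.exp N * ∑ b, π₀ x b * Real.exp (∑ i, η i * φ x b i) := by
    rw [Finset.mul_sum]
    refine Finset.sum_le_sum fun b _ => ?_
    rw [mul_left_comm, ← Real.exp_add]
    refine mul_le_mul_of_nonneg_left (Real.exp_le_exp.2 ?_) (hπ₀ x b).le
    linarith [(abs_le.1 (h b)).2]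
  have hW : π₀ x a * Real.exp (∑ i, η i * φ x a i)
      ≤ Real.exp N * (π₀ x a * Real.exp (∑ i, θ i * φ x a i)) := by
    rw [mul_left_comm, ← Real.exp_add]
    refine mul_le_mul_of_nonneg_left (Real.exp_le_exp.2 ?_) (hπ₀ x a).le
    linarith [(abs_le.1 (h a)).1]
  have h1 := norm_pos (φ := φ) hπ₀ θ x
  have h2 := norm_pos (φ := φ) hπ₀ η x
  unfold pol
  rw [← mul_div_assoc, div_le_div_iff₀ h2 h1]
  calc _ ≤ (Real.exp N * (π₀ x a * Real.exp (∑ i, θ i * φ x a i))) *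
        (Real.exp N * ∑ b, π₀ x b * Real.exp (∑ i, η i * φ x b i)) :=
        mul_le_mul hW hZ h1.le
          (mul_nonneg (Real.exp_pos _).le (mul_pos (hπ₀ x a) (Real.exp_pos _)).le)
    _ = _ := by rw [two_mul, Real.exp_add]; ring

end Softmax

/-- The quadratic form of the feature covariance is the averaged variance of the linear function. -/
theorem covMat_quad {X A : Type*} [Fintype X] [Fintype A] {d : ℕ}
    (D : X → ℝ) (φ : X → A → Fin d → ℝ) (π : X → A → ℝ) (v : Fin d → ℝ) :
    v ⬝ᵥ (covMat D φ π *ᵥ v) =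
      ∑ x, D x * ∑ a, π x a * (linF φ v x a - ∑ b, π x b * linF φ v x b) ^ 2 := by
  have hdev : ∀ x a, linF φ v x a - ∑ b, π x b * linF φ v x b
      = ∑ i, v i * (φ x a i - featMean φ π x i) := by
    intro x a
    simp only [linF, featMean, mul_sub, Finset.sum_sub_distrib, Finset.mul_sum]
    rw [Finset.sum_comm]
    congr 1
    exact Finset.sum_congr rfl fun i _ => Finset.sum_congr rfl fun b _ => by ring
  simp only [hdev, sq, dotProduct, Matrix.mulVec, covMat, Matrix.of_apply,
    Finset.mul_sum, Finset.sum_mul]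
  calc _ = ∑ i, ∑ x, ∑ j, ∑ a, v i * (D x * (π x a *
        ((φ x a i - featMean φ π x i) * (φ x a j - featMean φ π x j))) * v j) :=
        Finset.sum_congr rfl fun i _ => Finset.sum_comm
    _ = ∑ x, ∑ i, ∑ j, ∑ a, v i * (D x * (π x a *
        ((φ x a i - featMean φ π x i) * (φ x a j - featMean φ π x j))) * v j) := Finset.sum_comm
    _ = ∑ x, ∑ i, ∑ a, ∑ j, v i * (D x * (π x a *
        ((φ x a i - featMean φ π x i) * (φ x a j - featMean φ π x j))) * v j) :=
        Finset.sum_congr rfl fun x _ => Finset.sum_congr rfl fun i _ => Finset.sum_comm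
    _ = ∑ x, ∑ a, ∑ i, ∑ j, v i * (D x * (π x a *
        ((φ x a i - featMean φ π x i) * (φ x a j - featMean φ π x j))) * v j) :=
        Finset.sum_congr rfl fun x _ => Finset.sum_comm
    _ = _ := by
        refine Finset.sum_congr rfl fun x _ => Finset.sum_congr rfl fun a _ =>
          Finset.sum_congr rfl fun i _ => Finset.sum_congr rfl fun j _ => ?_
        ring

/-- In the linear softmax setting with V(π*) ⪰ λI:
(i) ‖θ − θ*‖₂ ≤ (2/λ)·MAD_{π*}(f_θ − f_{θ*}); and
(ii) if MAD_{π*}(f_θ − f_{θ*}) ≤ r, then the density ratio sup_{x,a} π*(a|x)/π_θ(a|x)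
is at most e^{4r/λ}, hence the MAD-based coverage C_{π_θ→π*} is at most e^{4r/λ}. -/
theorem mad_coverage_linear {X A : Type*} [Fintype X] [Fintype A]
    [Nonempty X] [Nonempty A] (d : ℕ)
    (D : X → ℝ) (hD : ∀ x, 0 ≤ D x) (hD1 : ∑ x, D x = 1)
    (φ : X → A → Fin d → ℝ) (hφ : ∀ x a, ∑ i, (φ x a i)^2 ≤ 1)
    (π₀ : X → A → ℝ) (hπ₀ : ∀ x a, 0 < π₀ x a) (hπ₀1 : ∀ x, ∑ a, π₀ x a = 1)
    (θstar : Fin d → ℝ) (lam : ℝ) (hlam : 0 < lam)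
    (hV : LoewnerLE (lam • (1 : Matrix (Fin d) (Fin d) ℝ)) (covMat D φ (pol π₀ φ θstar))) :
    ∀ θ : Fin d → ℝ,
      (Real.sqrt (∑ i, (θ i - θstar i)^2)
          ≤ 2 / lam * madOf D (pol π₀ φ θstar) (fun x a => linF φ θ x a - linF φ θstar x a)) ∧
      (∀ r : ℝ,
        madOf D (pol π₀ φ θstar) (fun x a => linF φ θ x a - linF φ θstar x a) ≤ r →
        (∀ x a, pol π₀ φ θstar x a / pol π₀ φ θ x a ≤ Real.exp (4 * r / lam)) ∧
        sInf {C : ℝ | 0 < C ∧ ∀ ν : Fin d → ℝ,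
            madOf D (pol π₀ φ θstar) (linF φ ν) ≤ C * madOf D (pol π₀ φ θ) (linF φ ν)}
          ≤ Real.exp (4 * r / lam)) := by
  intro θ
  set Δ : Fin d → ℝ := fun i => θ i - θstar i with hΔ
  set N : ℝ := Real.sqrt (∑ i, (θ i - θstar i) ^ 2) with hN
  have hN0 : 0 ≤ N := Real.sqrt_nonneg _
  have hNsq : N ^ 2 = ∑ i, Δ i ^ 2 := Real.sq_sqrt (Finset.sum_nonneg fun i _ => sq_nonneg _)
  have hlin : (fun x a => linF φ θ x a - linF φ θstar x a) = linF φ Δ := by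
    funext x a
    simp only [linF, hΔ, sub_mul, Finset.sum_sub_distrib]
  have hCS : ∀ x a, |linF φ Δ x a| ≤ N := by
    intro x a
    apply abs_le_of_sq_le_sq _ hN0
    calc (linF φ Δ x a) ^ 2 ≤ (∑ i, Δ i ^ 2) * ∑ i, φ x a i ^ 2 :=
          Finset.sum_mul_sq_le_sq_mul_sq _ _ _
      _ ≤ N ^ 2 := by
          rw [← hNsq]
          exact mul_le_of_le_one_right (sq_nonneg _) (hφ x a)
  have hpos := fun x a => pol_pos (φ := φ) hπ₀ θstar x a
  have hsum := fun x => pol_sum (φ := φ) hπ₀ θstar x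
  set p := pol π₀ φ θstar with hp
  have hmean : ∀ x, |∑ b, p x b * linF φ Δ x b| ≤ N := by
    intro x
    calc _ ≤ ∑ b, |p x b * linF φ Δ x b| := Finset.abs_sum_le_sum_abs _ _
      _ ≤ ∑ b, p x b * N := Finset.sum_le_sum fun b _ => by
          rw [abs_mul, abs_of_pos (hpos x b)]
          exact mul_le_mul_of_nonneg_left (hCS x b) (hpos x b).le
      _ = N := by rw [← Finset.sum_mul, hsum, one_mul]
  have hvar : lam * N ^ 2 ≤ 2 * N * madOf D p (linF φ Δ) := by
    have h := hV.dotProduct_mulVec_nonneg Δ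
    rw [star_trivial, Matrix.sub_mulVec, dotProduct_sub, covMat_quad, Matrix.smul_mulVec,
      Matrix.one_mulVec, dotProduct_smul, smul_eq_mul] at h
    have hdot : Δ ⬝ᵥ Δ = N ^ 2 := by
      rw [hNsq]; exact Finset.sum_congr rfl fun i _ => (sq _).symm
    rw [hdot] at h
    refine (sub_nonneg.1 h).trans ?_
    unfold madOf
    rw [Finset.mul_sum]
    refine Finset.sum_le_sum fun x _ => ?_
    rw [mul_left_comm, Finset.mul_sum _ _ (2 * N)]
    refine mul_le_mul_of_nonneg_left (Finset.sum_le_sum fun a _ => ?_) (hD x)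
    rw [mul_left_comm]
    refine mul_le_mul_of_nonneg_left ?_ (hpos x a).le
    rw [← sq_abs, sq]
    refine mul_le_mul_of_nonneg_right ?_ (abs_nonneg _)
    calc _ ≤ |linF φ Δ x a| + |∑ b, p x b * linF φ Δ x b| := abs_sub _ _
      _ ≤ 2 * N := by linarith [hCS x a, hmean x]
  have hmad0 : 0 ≤ madOf D p (linF φ Δ) :=
    Finset.sum_nonneg fun x _ => mul_nonneg (hD x) <|
      Finset.sum_nonneg fun a _ => mul_nonneg (hpos x a).le (abs_nonneg _)
  have hi : N ≤ 2 / lam * madOf D p (linF φ Δ) := by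
    rw [div_mul_eq_mul_div, le_div_iff₀ hlam]
    rcases hN0.eq_or_lt with h0 | h0
    · rw [← h0]; linarith
    · refine le_of_mul_le_mul_left ?_ h0
      linarith
  rw [hlin]
  refine ⟨hi, fun r hr => ?_⟩
  have hB : Real.exp (2 * N) ≤ Real.exp (4 * r / lam) := by
    refine Real.exp_le_exp.2 ?_
    calc 2 * N ≤ 2 * (2 / lam * r) := by
          refine mul_le_mul_of_nonneg_left (hi.trans ?_) zero_le_two
          exact mul_le_mul_of_nonneg_left hr (by positivity)
      _ = 4 * r / lam := by ring
  have hratio : ∀ x a, p x a ≤ Real.exp (4 * r / lam) * pol π₀ φ θ x a := by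
    intro x a
    refine (pol_le hπ₀ θ θstar N x (fun a => ?_) a).trans
      (mul_le_mul_of_nonneg_right hB (pol_pos hπ₀ θ x a).le)
    have h := hCS x a
    rw [← hlin] at h
    exact h
  refine ⟨fun x a => (div_le_iff₀ (pol_pos hπ₀ θ x a)).2 (hratio x a), ?_⟩
  refine csInf_le ⟨0, fun C hC => hC.1.le⟩ ⟨Real.exp_pos _, fun ν => ?_⟩
  unfold madOf
  rw [Finset.mul_sum]
  refine Finset.sum_le_sum fun x _ => ?_
  rw [mul_left_comm]
  exact mul_le_mul_of_nonneg_left (mad_le_of_ratio _ _ (pol_sum hπ₀ θ x) (hsum x)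
    (fun a => (hpos x a).le) _ (hratio x) _) (hD x)
end

section
/- Let d ≥ 1, let A = {0, 1, …, d}, let π₀ be a probability distribution on A, and for a parameter vector θ ∈ ℝ^{d+1} define the joint preference-observation distribution P_θ on A × A × {0,1} by: (a¹, a²) drawn i.i.d. from π₀, and y ∼ Bernoulli(σ(θ_{a¹} − θ_{a²})), where σ(z) = 1/(1+e^{−z}). Then for any two parameter vectors θ_j, θ_k ∈ ℝ^{d+1}, KL(P_{θ_j} ‖ P_{θ_k}) ≤ (1/4)·E_{a∼π₀}[(θ_{j,a} − θ_{k,a})²] = (1/4)·Σ_{a∈A} π₀(a)·(θ_{j,a} − θ_{k,a})². -/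
/-!
The observation pair `(a¹, a²)` has the same law under both parameters, so the chain rule reduces
the divergence to the average over pairs of the divergence between two Bernoulli laws with logits
`u = θⱼ a¹ - θⱼ a²` and `v = θₖ a¹ - θₖ a²`. In the logit parametrization this Bernoulli divergence
is the Bregman divergence of the log-partition function `A z = log (1 + e ^ z)`, whose second
derivative `σ (1 - σ)` is at most `1/4`; hence it is at most `(u - v) ^ 2 / 8`
(`bernoulli_kl_le`). With `δ = θⱼ - θₖ`, the average of `(δ a¹ - δ a²) ^ 2` over i.i.d. pairs is
`2 Var δ ≤ 2 E[δ ^ 2]` (`sum_pair_sq_le`), which gives the constant `1/4`.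
-/

open Finset

/-- The sigmoid function σ(z) = 1/(1+e^{-z}). -/
noncomputable def sigmoid (z : ℝ) : ℝ := 1 / (1 + Real.exp (-z))

/-- The preference-observation law P_θ on A × A × {0,1}: (a¹,a²) i.i.d. from π₀ and
y ∼ Bernoulli(σ(θ_{a¹} − θ_{a²})). -/
noncomputable def prefLaw {d : ℕ} (π₀ : Fin (d+1) → ℝ) (θ : Fin (d+1) → ℝ)
    (t : Fin (d+1) × Fin (d+1) × Bool) : ℝ :=
  π₀ t.1 * π₀ t.2.1 *
    (if t.2.2 then sigmoid (θ t.1 - θ t.2.1) else 1 - sigmoid (θ t.1 - θ t.2.1))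

/-- KL divergence between two distributions on a finite type. -/
noncomputable def klFin {Ω : Type*} [Fintype Ω] (P Q : Ω → ℝ) : ℝ :=
  ∑ ω, P ω * Real.log (P ω / Q ω)

/-- The log-partition function of the Bernoulli family in logit form; its derivative is the
sigmoid. -/
noncomputable def logPart (z : ℝ) : ℝ := Real.log (1 + Real.exp z)

lemma sigmoid_eq (z : ℝ) : sigmoid z = Real.exp z / (1 + Real.exp z) := by
  unfold sigmoid
  rw [Real.exp_neg]
  have := Real.exp_pos z
  field_simp
  ring

lemma one_sub_sigmoid_eq (z : ℝ) : 1 - sigmoid z = 1 / (1 + Real.exp z) := by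
  rw [sigmoid_eq]
  have := Real.exp_pos z
  field_simp
  ring

lemma sigmoid_pos (z : ℝ) : 0 < sigmoid z := by
  unfold sigmoid; positivity

lemma one_sub_sigmoid_pos (z : ℝ) : 0 < 1 - sigmoid z := by
  rw [one_sub_sigmoid_eq]; positivity

lemma log_sigmoid (z : ℝ) : Real.log (sigmoid z) = z - logPart z := by
  rw [sigmoid_eq, Real.log_div (by positivity) (by positivity), Real.log_exp, logPart]

lemma log_one_sub_sigmoid (z : ℝ) : Real.log (1 - sigmoid z) = -logPart z := by
  rw [one_sub_sigmoid_eq, one_div, Real.log_inv, logPart]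

lemma hasDerivAt_logPart (z : ℝ) : HasDerivAt logPart (sigmoid z) z := by
  rw [sigmoid_eq]
  exact ((Real.hasDerivAt_exp z).const_add 1).log (by positivity)

lemma hasDerivAt_sigmoid (z : ℝ) :
    HasDerivAt sigmoid (sigmoid z * (1 - sigmoid z)) z := by
  have h := (Real.hasDerivAt_exp z).div ((Real.hasDerivAt_exp z).const_add 1)
    (by positivity : 1 + Real.exp z ≠ 0)
  have hfun : sigmoid = fun z => Real.exp z / (1 + Real.exp z) := funext sigmoid_eq
  rw [one_sub_sigmoid_eq, sigmoid_eq, hfun]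
  refine h.congr_deriv ?_
  have := Real.exp_pos z
  field_simp
  ring

/-- Equivalent to `logPart` being `1/4`-smooth. -/
lemma convexOn_sq_sub_logPart : ConvexOn ℝ Set.univ (fun z => z ^ 2 / 8 - logPart z) := by
  have h1 : ∀ z : ℝ, HasDerivAt (fun z => z ^ 2 / 8 - logPart z) (z / 4 - sigmoid z) z := by
    intro z
    refine (((hasDerivAt_pow 2 z).div_const 8).sub (hasDerivAt_logPart z)).congr_deriv ?_
    push_cast
    ring
  have h2 : ∀ z : ℝ, HasDerivAt (fun z => z / 4 - sigmoid z)
      (1 / 4 - sigmoid z * (1 - sigmoid z)) z := fun z =>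
    ((hasDerivAt_id z).div_const 4).sub (hasDerivAt_sigmoid z)
  have hd : deriv (fun z => z ^ 2 / 8 - logPart z) = fun z => z / 4 - sigmoid z :=
    funext fun z => (h1 z).deriv
  refine Monotone.convexOn_univ_of_deriv (fun z => (h1 z).differentiableAt) ?_
  rw [hd]
  refine monotone_of_deriv_nonneg (fun z => (h2 z).differentiableAt) fun z => ?_
  rw [(h2 z).deriv]
  nlinarith [sq_nonneg (sigmoid z - 1 / 2)]

/-- The Bregman divergence of `logPart` is at most `(v - u) ^ 2 / 8`. -/
lemma logPart_sub_le (u v : ℝ) :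
    logPart v - logPart u - sigmoid u * (v - u) ≤ (v - u) ^ 2 / 8 := by
  have hderiv : HasDerivAt (fun z => z ^ 2 / 8 - logPart z) (u / 4 - sigmoid u) u := by
    refine (((hasDerivAt_pow 2 u).div_const 8).sub (hasDerivAt_logPart u)).congr_deriv ?_
    push_cast
    ring
  -- A convex function lies above its tangent line at `u`.
  have key : (u / 4 - sigmoid u) * (v - u) ≤
      (v ^ 2 / 8 - logPart v) - (u ^ 2 / 8 - logPart u) := by
    rcases lt_trichotomy u v with h | h | h
    · have := convexOn_sq_sub_logPart.le_slope_of_hasDerivAt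
        (Set.mem_univ u) (Set.mem_univ v) h hderiv
      rwa [slope_def_field, le_div_iff₀ (by linarith)] at this
    · simp [h]
    · have := convexOn_sq_sub_logPart.slope_le_of_hasDerivAt
        (Set.mem_univ v) (Set.mem_univ u) h hderiv
      rw [slope_def_field, div_le_iff₀ (by linarith)] at this
      linarith
  nlinarith [key]

lemma bernoulli_kl_le (u v : ℝ) :
    sigmoid u * Real.log (sigmoid u / sigmoid v)
      + (1 - sigmoid u) * Real.log ((1 - sigmoid u) / (1 - sigmoid v)) ≤ (u - v) ^ 2 / 8 := by
  rw [Real.log_div (sigmoid_pos u).ne' (sigmoid_pos v).ne',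
    Real.log_div (one_sub_sigmoid_pos u).ne' (one_sub_sigmoid_pos v).ne',
    log_sigmoid, log_sigmoid, log_one_sub_sigmoid, log_one_sub_sigmoid]
  linarith [logPart_sub_le u v]

/-- The common factor cancels inside the logarithm; when it vanishes both sides are zero. -/
lemma mul_log_mul_div (w p q : ℝ) :
    w * p * Real.log (w * p / (w * q)) = w * (p * Real.log (p / q)) := by
  rcases eq_or_ne w 0 with rfl | hw
  · simp
  · rw [mul_div_mul_left _ _ hw, mul_assoc]

/-- When `p` is a probability vector this reads `E[(x a - x b) ^ 2] = 2 Var x ≤ 2 E[x ^ 2]` for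
i.i.d. `a, b` with law `p`; the algebra needs only total mass one, not nonnegativity. -/
lemma sum_pair_sq_le {ι : Type*} [Fintype ι] (p x : ι → ℝ) (hp : ∑ a, p a = 1) :
    ∑ a, ∑ b, p a * p b * (x a - x b) ^ 2 ≤ 2 * ∑ a, p a * x a ^ 2 := by
  have h : ∑ a, ∑ b, p a * p b * (x a - x b) ^ 2
      = (∑ a, p a * x a ^ 2) * (∑ b, p b) + (∑ a, p a) * (∑ b, p b * x b ^ 2)
        - 2 * ((∑ a, p a * x a) * (∑ b, p b * x b)) := by
    rw [Finset.sum_mul_sum, Finset.sum_mul_sum, Finset.sum_mul_sum]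
    simp only [Finset.mul_sum, ← Finset.sum_add_distrib, ← Finset.sum_sub_distrib]
    refine Finset.sum_congr rfl fun a _ => Finset.sum_congr rfl fun b _ => ?_
    ring
  rw [h, hp]
  nlinarith [mul_self_nonneg (∑ a, p a * x a)]

/-- Per-sample KL bound: KL(P_{θ_j} ‖ P_{θ_k}) ≤ (1/4)·Σ_a π₀(a)·(θ_{j,a} − θ_{k,a})². -/
theorem prefLaw_kl_le (d : ℕ) (hd : 1 ≤ d)
    (π₀ : Fin (d+1) → ℝ) (hπ₀ : ∀ a, 0 ≤ π₀ a) (hπ₀1 : ∑ a, π₀ a = 1)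
    (θj θk : Fin (d+1) → ℝ) :
    klFin (prefLaw π₀ θj) (prefLaw π₀ θk)
      ≤ (1/4 : ℝ) * ∑ a, π₀ a * (θj a - θk a)^2 := by
  have hpt : ∀ a b : Fin (d+1),
      ∑ y : Bool, prefLaw π₀ θj (a, b, y) * Real.log (prefLaw π₀ θj (a, b, y)
        / prefLaw π₀ θk (a, b, y))
      ≤ π₀ a * π₀ b * (((θj a - θk a) - (θj b - θk b)) ^ 2 / 8) := by
    intro a b
    simp only [Fintype.sum_bool, prefLaw, if_true, Bool.false_eq_true, if_false,
      mul_log_mul_div, ← mul_add]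
    refine mul_le_mul_of_nonneg_left ?_ (mul_nonneg (hπ₀ a) (hπ₀ b))
    refine (bernoulli_kl_le _ _).trans_eq ?_
    ring
  calc klFin (prefLaw π₀ θj) (prefLaw π₀ θk)
      ≤ ∑ a, ∑ b, π₀ a * π₀ b * (((θj a - θk a) - (θj b - θk b)) ^ 2 / 8) := by
        unfold klFin
        rw [Fintype.sum_prod_type]
        refine Finset.sum_le_sum fun a _ => ?_
        rw [Fintype.sum_prod_type]
        exact Finset.sum_le_sum fun b _ => hpt a b
    _ = (∑ a, ∑ b, π₀ a * π₀ b * ((θj a - θk a) - (θj b - θk b)) ^ 2) / 8 := by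
        simp only [Finset.sum_div, mul_div_assoc]
    _ ≤ (1/4 : ℝ) * ∑ a, π₀ a * (θj a - θk a)^2 := by
        linarith [sum_pair_sq_le π₀ (fun a => θj a - θk a) hπ₀1]
end
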